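/- The matrix S̃_r is symmetric positive semidefinite, and its K_r-th largest eigenvalue satisfies λ_{K_r}(S̃_r) ≥ θ_{r,min}^2 · θ_{c,min}^2 · n_{r,min} · n_{c,min} · λ_min(Σ_{l=1}^L B_l B_l^T), where λ_min(Σ_{l=1}^L B_l B_l^T) denotes the smallest eigenvalue of the K_r × K_r positive semidefinite matrix Σ_{l=1}^L B_l B_l^T. -/

import Mathlib

open Matrix Finset

lemma aux_spec {n : ℕ} (A : Matrix (Fin n) (Fin n) ℝ) (hA : A.IsHermitian) :
    ∃ V : Matrix (Fin n) (Fin n) ℝ, Vᵀ * V = 1 ∧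
      A = Vᵀ * diagonal hA.eigenvalues * V := by
  refine ⟨(hA.eigenvectorUnitary : Matrix (Fin n) (Fin n) ℝ)ᵀ, ?_, ?_⟩
  · have h := (Matrix.mem_unitaryGroup_iff).1 hA.eigenvectorUnitary.2
    rw [Matrix.transpose_transpose]
    rw [Matrix.star_eq_conjTranspose, Matrix.conjTranspose_eq_transpose_of_trivial] at h
    exact h
  · have h := hA.spectral_theorem
    rw [Unitary.conjStarAlgAut_apply, Matrix.star_eq_conjTranspose,
      Matrix.conjTranspose_eq_transpose_of_trivial] at h
    rw [Matrix.transpose_transpose]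
    exact h

lemma aux_quad {m n : ℕ} (Y : Matrix (Fin m) (Fin n) ℝ) (D : Matrix (Fin m) (Fin m) ℝ)
    (x : Fin n → ℝ) :
    x ⬝ᵥ ((Yᵀ * D * Y) *ᵥ x) = (Y *ᵥ x) ⬝ᵥ (D *ᵥ (Y *ᵥ x)) := by
  rw [← Matrix.mulVec_mulVec, ← Matrix.mulVec_mulVec, Matrix.dotProduct_mulVec,
    Matrix.vecMul_transpose]

lemma aux_gram {m n : ℕ} (Y : Matrix (Fin m) (Fin n) ℝ) (x : Fin n → ℝ) :
    (Y *ᵥ x) ⬝ᵥ (Y *ᵥ x) = x ⬝ᵥ ((Yᵀ * Y) *ᵥ x) := by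
  rw [← Matrix.mulVec_mulVec, Matrix.dotProduct_mulVec x, Matrix.vecMul_transpose]

lemma aux_diag {n : ℕ} (d x : Fin n → ℝ) :
    x ⬝ᵥ (diagonal d *ᵥ x) = ∑ i, d i * x i ^ 2 := by
  simp only [dotProduct, Matrix.mulVec_diagonal]
  exact Finset.sum_congr rfl fun i _ => by ring

lemma aux_min {n : ℕ} (A : Matrix (Fin n) (Fin n) ℝ) (hA : A.IsHermitian) (c : ℝ)
    (hc : ∀ i, c ≤ hA.eigenvalues i) (x : Fin n → ℝ) : c * (x ⬝ᵥ x) ≤ x ⬝ᵥ (A *ᵥ x) := by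
  obtain ⟨V, hV, h⟩ := aux_spec A hA
  have h1 : x ⬝ᵥ x = ∑ i, (V *ᵥ x) i ^ 2 := by
    have := aux_gram V x
    rw [hV, Matrix.one_mulVec] at this
    rw [← this]
    simp only [dotProduct, sq]
  have h2 : x ⬝ᵥ (A *ᵥ x) = ∑ i, hA.eigenvalues i * (V *ᵥ x) i ^ 2 := by
    rw [← aux_diag, ← aux_quad, ← h]
  rw [h1, h2, Finset.mul_sum]
  exact Finset.sum_le_sum fun i _ => mul_le_mul_of_nonneg_right (hc i) (sq_nonneg _)

lemma aux_count {n K : ℕ} (A : Matrix (Fin n) (Fin n) ℝ) (hA : A.IsHermitian) (c : ℝ)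
    (Y : Matrix (Fin n) (Fin K) ℝ) (hY : ∀ x, Y *ᵥ x = 0 → x = 0)
    (hq : ∀ x, c * ((Y *ᵥ x) ⬝ᵥ (Y *ᵥ x)) ≤ (Y *ᵥ x) ⬝ᵥ (A *ᵥ (Y *ᵥ x))) :
    K ≤ (Finset.univ.filter fun i : Fin n => c ≤ hA.eigenvalues i).card := by
  obtain ⟨V, hV, h⟩ := aux_spec A hA
  by_contra hlt
  push Not at hlt
  set s := Finset.univ.filter fun i : Fin n => c ≤ hA.eigenvalues i with hs
  let f : (Fin K → ℝ) →ₗ[ℝ] (s → ℝ) :=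
    (LinearMap.funLeft ℝ ℝ (Subtype.val : s → Fin n)).comp (Matrix.mulVecLin (V * Y))
  have hker : LinearMap.ker f ≠ ⊥ := by
    apply LinearMap.ker_ne_bot_of_finrank_lt
    simpa using hlt
  obtain ⟨x, hx, hx0⟩ := Submodule.exists_mem_ne_zero_of_ne_bot hker
  set q := V *ᵥ (Y *ᵥ x) with hqd
  have hqs : ∀ i, c ≤ hA.eigenvalues i → q i = 0 := by
    intro i hi
    have := congrFun (LinearMap.mem_ker.1 hx) ⟨i, by simp [hs, hi]⟩
    simpa [f, LinearMap.funLeft_apply, hqd, Matrix.mulVec_mulVec] using this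
  have h1 : (Y *ᵥ x) ⬝ᵥ (Y *ᵥ x) = ∑ i, q i ^ 2 := by
    have := aux_gram V (Y *ᵥ x)
    rw [hV, Matrix.one_mulVec] at this
    rw [← this]
    simp only [dotProduct, sq, hqd]
  have h2 : (Y *ᵥ x) ⬝ᵥ (A *ᵥ (Y *ᵥ x)) = ∑ i, hA.eigenvalues i * q i ^ 2 := by
    rw [hqd, ← aux_diag, ← aux_quad V, ← h]
  have h3 := hq x
  rw [h1, h2, Finset.mul_sum] at h3
  have hle : ∀ i, hA.eigenvalues i * q i ^ 2 ≤ c * q i ^ 2 := by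
    intro i
    by_cases hi : c ≤ hA.eigenvalues i
    · simp [hqs i hi]
    · exact mul_le_mul_of_nonneg_right (not_le.1 hi).le (sq_nonneg _)
  have h4 := (Finset.sum_eq_sum_iff_of_le (fun i _ => hle i)).1
    (le_antisymm (Finset.sum_le_sum fun i _ => hle i) h3)
  have h5 : ∀ i, q i = 0 := by
    intro i
    by_cases hi : c ≤ hA.eigenvalues i
    · exact hqs i hi
    · have h6 := h4 i (Finset.mem_univ _)
      by_contra hne
      have := mul_right_cancel₀ (pow_ne_zero 2 hne) h6
      exact hi this.ge
  have h7 : (Y *ᵥ x) ⬝ᵥ (Y *ᵥ x) = 0 := by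
    rw [h1]; simp [h5]
  exact hx0 (hY x (dotProduct_self_eq_zero.1 h7))

lemma aux_member {n K : ℕ} (Z : Matrix (Fin n) (Fin K) ℝ)
    (hZ01 : ∀ i k, Z i k = 0 ∨ Z i k = 1) (hZrow : ∀ i, ∃! k, Z i k = 1)
    (θ : Fin n → ℝ) (t : ℝ) (ht0 : 0 ≤ t) (ht : ∀ i, t ≤ θ i)
    (N : ℕ) (hN : ∀ k, N ≤ (Finset.univ.filter fun i => Z i k = 1).card) :
    ∃ d : Fin K → ℝ, (diagonal θ * Z)ᵀ * (diagonal θ * Z) = diagonal d ∧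
      ∀ k, t ^ 2 * N ≤ d k := by
  refine ⟨fun k => ∑ i, θ i ^ 2 * Z i k, ?_, ?_⟩
  · ext k k'
    rw [Matrix.mul_apply, Matrix.diagonal_apply]
    simp only [Matrix.transpose_apply, Matrix.diagonal_mul]
    split_ifs with hk
    · subst hk
      refine Finset.sum_congr rfl fun i _ => ?_
      rcases hZ01 i k with h | h <;> rw [h] <;> ring
    · refine Finset.sum_eq_zero fun i _ => ?_
      rcases hZ01 i k with h | h
      · rw [h]; ring
      · rcases hZ01 i k' with h' | h'
        · rw [h']; ring
        · exact absurd ((hZrow i).unique h h') hk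
  · intro k
    calc t ^ 2 * (N : ℝ)
        ≤ t ^ 2 * ((Finset.univ.filter fun i => Z i k = 1).card : ℝ) := by
          have : (N : ℝ) ≤ ((Finset.univ.filter fun i => Z i k = 1).card : ℝ) := by
            exact_mod_cast hN k
          exact mul_le_mul_of_nonneg_left this (sq_nonneg _)
      _ = ∑ i, (if Z i k = 1 then t ^ 2 else 0) := by
          rw [← Finset.sum_filter, Finset.sum_const, nsmul_eq_mul, mul_comm]
      _ ≤ _ := by
          refine Finset.sum_le_sum fun i _ => ?_
          split_ifs with h
          · rw [h, mul_one]
            exact pow_le_pow_left₀ ht0 (ht i) 2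
          · rcases hZ01 i k with h' | h'
            · simp [h']
            · exact absurd h' h

lemma aux_sumquad {m n L : ℕ} (B : Fin L → Matrix (Fin m) (Fin n) ℝ) (w : Fin m → ℝ) :
    w ⬝ᵥ ((∑ l, B l * (B l)ᵀ) *ᵥ w) = ∑ l, ((B l)ᵀ *ᵥ w) ⬝ᵥ ((B l)ᵀ *ᵥ w) := by
  rw [Matrix.sum_mulVec, dotProduct_sum]
  refine Finset.sum_congr rfl fun l _ => ?_
  rw [aux_gram, Matrix.transpose_transpose]

/-- lower bound for the `K_r`-th largest eigenvalue of `S̃_r`.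
`S̃_r` is symmetric positive semidefinite and at least `K_r` of its eigenvalues (with
multiplicity) are at least `θ_{r,min}² θ_{c,min}² n_{r,min} n_{c,min} λ_min(∑_l B_l B_lᵀ)`;
i.e. its `K_r`-th largest eigenvalue is bounded below by this quantity. -/
theorem stmt12
    (nr nc Kr Kc L : ℕ)
    (hnr : 0 < nr) (hnc : 0 < nc) (hKr : 0 < Kr) (hKc : 0 < Kc) (hL : 0 < L)
    (Zr : Matrix (Fin nr) (Fin Kr) ℝ) (Zc : Matrix (Fin nc) (Fin Kc) ℝ)
    (hZr01 : ∀ i k, Zr i k = 0 ∨ Zr i k = 1)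
    (hZrrow : ∀ i, ∃! k, Zr i k = 1)
    (hZrcol : ∀ k, ∃ i, Zr i k = 1)
    (hZc01 : ∀ j k, Zc j k = 0 ∨ Zc j k = 1)
    (hZcrow : ∀ j, ∃! k, Zc j k = 1)
    (hZccol : ∀ k, ∃ j, Zc j k = 1)
    (θr : Fin nr → ℝ) (θc : Fin nc → ℝ)
    (hθr : ∀ i, 0 < θr i ∧ θr i ≤ 1) (hθc : ∀ j, 0 < θc j ∧ θc j ≤ 1)
    (B : Fin L → Matrix (Fin Kr) (Fin Kc) ℝ)
    (hB01 : ∀ l k k', 0 ≤ B l k k' ∧ B l k k' ≤ 1)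
    (Ωm : Fin L → Matrix (Fin nr) (Fin nc) ℝ)
    (hΩm : ∀ l, Ωm l = Matrix.diagonal θr * Zr * B l * (Zc)ᵀ * Matrix.diagonal θc)
    (Str : Matrix (Fin nr) (Fin nr) ℝ)
    (hStr : Str = ∑ l, Ωm l * (Ωm l)ᵀ)
    (θrmin θcmin : ℝ)
    (hθrmin : IsLeast (Set.range θr) θrmin)
    (hθcmin : IsLeast (Set.range θc) θcmin)
    (nrmin ncmin : ℕ)
    (hnrmin : IsLeast
      (Set.range fun k : Fin Kr => (Finset.univ.filter fun i => Zr i k = 1).card) nrmin)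
    (hncmin : IsLeast
      (Set.range fun k : Fin Kc => (Finset.univ.filter fun j => Zc j k = 1).card) ncmin)
    -- the smallest eigenvalue of `∑ l, B l * (B l)ᵀ`
    (hBH : (∑ l, B l * (B l)ᵀ).IsHermitian)
    (lamB : ℝ) (hlamB : IsLeast (Set.range hBH.eigenvalues) lamB) :
    Str.PosSemidef ∧
    ∃ hH : Str.IsHermitian,
      Kr ≤ (Finset.univ.filter fun i : Fin nr =>
        θrmin ^ 2 * θcmin ^ 2 * nrmin * ncmin * lamB ≤ hH.eigenvalues i).card := by
  have hpsd : Str.PosSemidef := by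
    rw [hStr]
    refine Matrix.posSemidef_sum _ fun l _ => ?_
    have := Matrix.posSemidef_self_mul_conjTranspose (Ωm l)
    rwa [Matrix.conjTranspose_eq_transpose_of_trivial] at this
  refine ⟨hpsd, hpsd.1, ?_⟩
  have hBpsd : (∑ l, B l * (B l)ᵀ).PosSemidef := by
    refine Matrix.posSemidef_sum _ fun l _ => ?_
    have := Matrix.posSemidef_self_mul_conjTranspose (B l)
    rwa [Matrix.conjTranspose_eq_transpose_of_trivial] at this
  have hlam0 : 0 ≤ lamB := by
    obtain ⟨i, hi⟩ := hlamB.1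
    rw [← hi]
    exact hBpsd.eigenvalues_nonneg i
  have hr0 : 0 < θrmin := by
    obtain ⟨i, hi⟩ := hθrmin.1
    rw [← hi]; exact (hθr i).1
  have hc0 : 0 < θcmin := by
    obtain ⟨i, hi⟩ := hθcmin.1
    rw [← hi]; exact (hθc i).1
  have hn0 : 0 < nrmin := by
    obtain ⟨k, hk⟩ := hnrmin.1
    obtain ⟨i, hi⟩ := hZrcol k
    rw [← hk]
    exact Finset.card_pos.2 ⟨i, by simp [hi]⟩
  obtain ⟨dr, hdr, hdr'⟩ := aux_member Zr hZr01 hZrrow θr θrmin hr0.le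
    (fun i => hθrmin.2 ⟨i, rfl⟩) nrmin (fun k => hnrmin.2 ⟨k, rfl⟩)
  obtain ⟨dc, hdc, hdc'⟩ := aux_member Zc hZc01 hZcrow θc θcmin hc0.le
    (fun i => hθcmin.2 ⟨i, rfl⟩) ncmin (fun k => hncmin.2 ⟨k, rfl⟩)
  set Y := diagonal θr * Zr with hY
  set X := diagonal θc * Zc with hX
  have hcr : 0 < θrmin ^ 2 * (nrmin : ℝ) := by positivity
  have hcc : 0 ≤ θcmin ^ 2 * (ncmin : ℝ) := by positivity
  have hdr0 : ∀ k, 0 < dr k := fun k => lt_of_lt_of_le hcr (hdr' k)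
  have hYY : ∀ x, (Y *ᵥ x) ⬝ᵥ (Y *ᵥ x) = ∑ k, dr k * x k ^ 2 := by
    intro x; rw [aux_gram, hdr, aux_diag]
  have hXX : ∀ v, θcmin ^ 2 * ncmin * (v ⬝ᵥ v) ≤ (X *ᵥ v) ⬝ᵥ (X *ᵥ v) := by
    intro v
    rw [aux_gram, hdc, aux_diag, dotProduct, Finset.mul_sum]
    refine Finset.sum_le_sum fun k _ => ?_
    rw [← sq]
    exact mul_le_mul_of_nonneg_right (hdc' k) (sq_nonneg _)
  refine aux_count Str hpsd.1 _ Y ?_ ?_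
  · intro x hx
    have h := hYY x
    rw [hx, zero_dotProduct] at h
    have h' := (Finset.sum_eq_zero_iff_of_nonneg
      (fun k _ => mul_nonneg (hdr0 k).le (sq_nonneg (x k)))).1 h.symm
    funext k
    have := h' k (Finset.mem_univ _)
    simpa [(hdr0 k).ne'] using this
  · intro x
    have hΩ : ∀ l, (Ωm l)ᵀ *ᵥ (Y *ᵥ x) = X *ᵥ ((B l)ᵀ *ᵥ (diagonal dr *ᵥ x)) := by
      intro l
      have : Ωm l = Y * B l * Xᵀ := by
        rw [hΩm l, hX, Matrix.transpose_mul, Matrix.diagonal_transpose, Matrix.mul_assoc _ Zcᵀ]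
      rw [this, ← hdr]
      simp only [Matrix.transpose_mul, Matrix.transpose_transpose, Matrix.mulVec_mulVec,
        Matrix.mul_assoc]
    rw [hStr, aux_sumquad]
    simp only [hΩ]
    set u := diagonal dr *ᵥ x with hu
    have h1 : θcmin ^ 2 * ncmin * (lamB * (u ⬝ᵥ u)) ≤
        ∑ l, (X *ᵥ ((B l)ᵀ *ᵥ u)) ⬝ᵥ (X *ᵥ ((B l)ᵀ *ᵥ u)) := by
      calc _ ≤ θcmin ^ 2 * ncmin * (u ⬝ᵥ ((∑ l, B l * (B l)ᵀ) *ᵥ u)) :=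
            mul_le_mul_of_nonneg_left
              (aux_min _ hBH lamB (fun i => hlamB.2 ⟨i, rfl⟩) u) hcc
        _ ≤ _ := by
            rw [aux_sumquad, Finset.mul_sum]
            exact Finset.sum_le_sum fun l _ => hXX _
    refine le_trans ?_ h1
    have h2 : θrmin ^ 2 * nrmin * ((Y *ᵥ x) ⬝ᵥ (Y *ᵥ x)) ≤ u ⬝ᵥ u := by
      rw [hYY, dotProduct, Finset.mul_sum]
      refine Finset.sum_le_sum fun k _ => ?_
      rw [hu, Matrix.mulVec_diagonal]
      have := mul_le_mul_of_nonneg_right (hdr' k) (mul_nonneg (hdr0 k).le (sq_nonneg (x k)))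
      calc _ ≤ _ := this
        _ = _ := by ring
    have h3 := mul_le_mul_of_nonneg_left h2 (mul_nonneg hcc hlam0)
    calc _ = _ := by ring
      _ ≤ _ := h3
      _ = _ := by ring
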